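/- Let p, w be real-valued measurable functions on a bounded interval (a,b) with p > 0 a.e., 1/p ∈ L¹(a,b), and w ∈ L¹(a,b) with w ≠ 0 a.e. Suppose there exists a real-valued absolutely continuous function g̃ on [a,b] with ∫ₐᵇ p|g̃'|² < ∞ and g̃(x)w(x) > 0 for a.e. x ∈ (a,b). Then there exists a real-valued absolutely continuous function g on [a,b] with g(a) = g(b) = 0, ∫ₐᵇ p|g'|² < ∞, and g(x)w(x) > 0 for a.e. x ∈ (a,b). -/

import Mathlib

open MeasureTheory Real Complex

/-!
Multiply `g̃` by a function `h` that is positive inside `(a, b)` and vanishes at both endpoints.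
Absolutely continuous functions `f` with `∫ p |f'|² < ∞` are bounded, so by the Leibniz rule they
form an algebra, and it is enough that `h` belongs to it. For `r = √(1 / p)` one has `p r² = 1`, so
the primitives of `r` belong to it; the product `h x = (∫ₐˣ r) (∫ₓᵇ r)` takes the place of the
paper's tent function, which spares the choice of the midpoint `x₀`.
-/

theorem aestronglyMeasurable_of_one_div {α : Type*} [MeasurableSpace α] {μ : Measure α}
    {f : α → ℝ} (hf : AEStronglyMeasurable (fun x ↦ 1 / f x) μ) : AEStronglyMeasurable f μ := by
  simp only [one_div] at hf
  exact (aemeasurable_inv_iff.1 hf.aemeasurable).aestronglyMeasurable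

theorem integrable_sqrt {α : Type*} [MeasurableSpace α] {μ : Measure α} [IsFiniteMeasure μ]
    {f : α → ℝ} (hf : Integrable f μ) : Integrable (fun x ↦ √(f x)) μ := by
  have hbound : Integrable (fun x ↦ 1 + |f x|) μ := (integrable_const 1).add hf.abs
  refine hbound.mono' hf.aemeasurable.sqrt.aestronglyMeasurable (.of_forall fun x ↦ ?_)
  rw [norm_of_nonneg (sqrt_nonneg _), sqrt_le_left (by positivity)]
  nlinarith [le_abs_self (f x), abs_nonneg (f x)]

theorem integral_pos_of_ae_pos {α : Type*} [MeasurableSpace α] {μ : Measure α} [NeZero μ]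
    {f : α → ℝ} (hf : Integrable f μ) (hpos : ∀ᵐ x ∂μ, 0 < f x) : 0 < ∫ x, f x ∂μ := by
  rw [integral_pos_iff_support_of_nonneg_ae (hpos.mono fun _ ↦ le_of_lt) hf, pos_iff_ne_zero]
  exact frequently_ae_iff.1 (hpos.mono fun _ ↦ ne_of_gt).frequently

theorem intervalIntegral_pos_of_ae_pos {f : ℝ → ℝ} {a b : ℝ} (hab : a < b)
    (hf : IntervalIntegrable f volume a b)
    (hpos : ∀ᵐ x ∂volume.restrict (Set.Ioc a b), 0 < f x) : 0 < ∫ x in a..b, f x := by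
  have : NeZero (volume.restrict (Set.Ioc a b)) := ⟨by simp [hab]⟩
  rw [intervalIntegral.integral_of_le hab.le]
  exact integral_pos_of_ae_pos hf.1 hpos

theorem eq_add_integral_deriv_of_absolutelyContinuousOnInterval {f : ℝ → ℝ} {a b x : ℝ}
    (hf : AbsolutelyContinuousOnInterval f a b) (hx : x ∈ Set.uIcc a b) :
    f x = f a + ∫ t in a..x, deriv f t := by
  rw [(hf.mono (Set.uIcc_subset_uIcc_left hx)).integral_deriv_eq_sub, add_sub_cancel]

/-- The form domain of the weight `p` on the interval with endpoints `a` and `b`: the absolutely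
continuous functions `f` whose energy `∫ p |f'|²` is finite. Here `f'` is `deriv f`, which is the
true derivative almost everywhere between `a` and `b`. -/
structure HasFiniteEnergy (p f : ℝ → ℝ) (a b : ℝ) : Prop where
  absolutelyContinuous : AbsolutelyContinuousOnInterval f a b
  intervalIntegrable_energy : IntervalIntegrable (fun x ↦ p x * deriv f x ^ 2) volume a b

namespace HasFiniteEnergy

variable {p f g r : ℝ → ℝ} {a b c : ℝ}

theorem primitive (hr : IntervalIntegrable r volume a b)
    (hpr : IntervalIntegrable (fun x ↦ p x * r x ^ 2) volume a b) (hc : c ∈ Set.uIcc a b) :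
    HasFiniteEnergy p (fun x ↦ ∫ t in c..x, r t) a b where
  absolutelyContinuous := hr.absolutelyContinuousOnInterval_intervalIntegral hc
  intervalIntegrable_energy := by
    refine hpr.congr_ae ?_
    filter_upwards [ae_restrict_of_ae hr.ae_hasDerivAt_integral,
      ae_restrict_mem measurableSet_uIoc] with x hderiv hx
    rw [(hderiv (Set.uIoc_subset_uIcc hx) c hc).deriv]

theorem const_add (c : ℝ) (hf : HasFiniteEnergy p f a b) :
    HasFiniteEnergy p (fun x ↦ c + f x) a b where
  absolutelyContinuous :=
    (LipschitzWith.const c).lipschitzOnWith.absolutelyContinuousOnInterval.fun_add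
      hf.absolutelyContinuous
  intervalIntegrable_energy := by simpa using hf.intervalIntegrable_energy

theorem neg (hf : HasFiniteEnergy p f a b) : HasFiniteEnergy p (fun x ↦ -f x) a b where
  absolutelyContinuous := hf.absolutelyContinuous.neg
  intervalIntegrable_energy := by simpa using hf.intervalIntegrable_energy

theorem mul (hp : AEStronglyMeasurable p (volume.restrict (Set.uIoc a b)))
    (hf : HasFiniteEnergy p f a b) (hg : HasFiniteEnergy p g a b) :
    HasFiniteEnergy p (fun x ↦ f x * g x) a b where
  absolutelyContinuous := hf.absolutelyContinuous.fun_mul hg.absolutelyContinuous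
  intervalIntegrable_energy := by
    have hf_cont := hf.absolutelyContinuous.continuousOn
    have hg_cont := hg.absolutelyContinuous.continuousOn
    have hbound : IntervalIntegrable (fun x ↦ 2 * g x ^ 2 * ‖p x * deriv f x ^ 2‖
        + 2 * f x ^ 2 * ‖p x * deriv g x ^ 2‖) volume a b :=
      (hf.intervalIntegrable_energy.norm.continuousOn_mul (by fun_prop)).add
        (hg.intervalIntegrable_energy.norm.continuousOn_mul (by fun_prop))
    refine hbound.mono_fun' (hp.mul ((measurable_deriv _).pow_const 2).aestronglyMeasurable) ?_
    filter_upwards [ae_restrict_of_ae hf.absolutelyContinuous.ae_differentiableAt,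
      ae_restrict_of_ae hg.absolutelyContinuous.ae_differentiableAt,
      ae_restrict_mem measurableSet_uIoc] with x hf_diff hg_diff hx
    have hx' := Set.uIoc_subset_uIcc hx
    have leibniz := deriv_fun_mul (hf_diff hx') (hg_diff hx')
    calc ‖p x * deriv (fun x ↦ f x * g x) x ^ 2‖
        = |p x| * (deriv f x * g x + f x * deriv g x) ^ 2 := by
          rw [leibniz, norm_mul, norm_eq_abs, norm_of_nonneg (sq_nonneg _)]
      _ ≤ |p x| * (2 * ((deriv f x * g x) ^ 2 + (f x * deriv g x) ^ 2)) := by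
          gcongr
          exact add_sq_le
      _ = 2 * g x ^ 2 * ‖p x * deriv f x ^ 2‖ + 2 * f x ^ 2 * ‖p x * deriv g x ^ 2‖ := by
          simp only [norm_mul, norm_pow, norm_eq_abs, sq_abs]
          ring

end HasFiniteEnergy

theorem exists_hasFiniteEnergy_pos_vanishing_endpoints {p : ℝ → ℝ} {a b : ℝ} (hab : a ≤ b)
    (hp_pos : ∀ᵐ x ∂volume.restrict (Set.Ioc a b), 0 < p x)
    (hp_int : IntegrableOn (fun x ↦ 1 / p x) (Set.Ioc a b)) :
    ∃ h : ℝ → ℝ, HasFiniteEnergy p h a b ∧ h a = 0 ∧ h b = 0 ∧ ∀ x ∈ Set.Ioo a b, 0 < h x := by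
  let r : ℝ → ℝ := fun x ↦ √(1 / p x)
  have hr : IntervalIntegrable r volume a b :=
    (intervalIntegrable_iff_integrableOn_Ioc_of_le hab).2 (integrable_sqrt hp_int)
  have hpr : IntervalIntegrable (fun x ↦ p x * r x ^ 2) volume a b := by
    refine (intervalIntegrable_const (c := (1 : ℝ))).congr_ae ?_
    rw [Set.uIoc_of_le hab]
    filter_upwards [hp_pos] with x hx
    rw [sq_sqrt (by positivity), mul_one_div_cancel hx.ne']
  have hp : AEStronglyMeasurable p (volume.restrict (Set.uIoc a b)) := by
    simpa only [Set.uIoc_of_le hab] using aestronglyMeasurable_of_one_div hp_int.1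
  have hr_pos {c d : ℝ} (hc : c ∈ Set.Icc a b) (hd : d ∈ Set.Icc a b) (hcd : c < d) :
      0 < ∫ t in c..d, r t := by
    refine intervalIntegral_pos_of_ae_pos hcd (hr.mono_set ?_) ?_
    · exact Set.uIcc_subset_uIcc (Set.Icc_subset_uIcc hc) (Set.Icc_subset_uIcc hd)
    · filter_upwards [ae_restrict_of_ae_restrict_of_subset (Set.Ioc_subset_Ioc hc.1 hd.2) hp_pos]
        with x hx
      positivity
  refine ⟨fun x ↦ (∫ t in a..x, r t) * ∫ t in x..b, r t, .mul hp
    (.primitive hr hpr Set.left_mem_uIcc) ?_, by simp, by simp, fun x hx ↦ ?_⟩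
  · simpa only [intervalIntegral.integral_symm b] using
      (HasFiniteEnergy.primitive hr hpr Set.right_mem_uIcc).neg
  · have hx' := Set.Ioo_subset_Icc_self hx
    exact mul_pos (hr_pos (Set.left_mem_Icc.2 hab) hx' hx.1)
      (hr_pos hx' (Set.right_mem_Icc.2 hab) hx.2)

theorem comparison_function_vanishing_endpoints_general {a b : ℝ} (hab : a ≤ b)
    {p w gt gt' : ℝ → ℝ}
    (hp_pos : ∀ᵐ x ∂(volume.restrict (Set.Ioc a b)), 0 < p x)
    (hp_int : IntegrableOn (fun x ↦ 1 / p x) (Set.Ioc a b))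
    (hgt'int : IntegrableOn gt' (Set.Icc a b))
    (hgtAC : ∀ x ∈ Set.Icc a b, gt x = gt a + ∫ t in a..x, gt' t)
    (hgt2 : IntegrableOn (fun t ↦ p t * gt' t ^ 2) (Set.Ioc a b))
    (hgtw : ∀ᵐ x ∂(volume.restrict (Set.Ioc a b)), 0 < gt x * w x) :
    ∃ g g' : ℝ → ℝ, Measurable g'
      ∧ IntegrableOn g' (Set.Icc a b)
      ∧ (∀ x ∈ Set.Icc a b, g x = g a + ∫ t in a..x, g' t)
      ∧ g a = 0 ∧ g b = 0
      ∧ IntegrableOn (fun t ↦ p t * g' t ^ 2) (Set.Ioc a b)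
      ∧ (∀ᵐ x ∂(volume.restrict (Set.Ioc a b)), 0 < g x * w x) := by
  obtain ⟨h, hh, hha, hhb, hh_pos⟩ :=
    exists_hasFiniteEnergy_pos_vanishing_endpoints hab hp_pos hp_int
  let G : ℝ → ℝ := fun x ↦ gt a + ∫ t in a..x, gt' t
  have hG : HasFiniteEnergy p G a b := .const_add (gt a) <| .primitive
    ((intervalIntegrable_iff_integrableOn_Icc_of_le hab).2 hgt'int)
    ((intervalIntegrable_iff_integrableOn_Ioc_of_le hab).2 hgt2) Set.left_mem_uIcc
  have hp : AEStronglyMeasurable p (volume.restrict (Set.uIoc a b)) := by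
    simpa only [Set.uIoc_of_le hab] using aestronglyMeasurable_of_one_div hp_int.1
  have hhG : HasFiniteEnergy p (fun x ↦ h x * G x) a b := hh.mul hp hG
  refine ⟨fun x ↦ h x * G x, deriv fun x ↦ h x * G x, measurable_deriv _,
    (intervalIntegrable_iff_integrableOn_Icc_of_le hab).1
      hhG.absolutelyContinuous.intervalIntegrable_deriv,
    fun x hx ↦ eq_add_integral_deriv_of_absolutelyContinuousOnInterval
      hhG.absolutelyContinuous (Set.Icc_subset_uIcc hx), by simp [hha], by simp [hhb],
    (intervalIntegrable_iff_integrableOn_Ioc_of_le hab).1 hhG.intervalIntegrable_energy, ?_⟩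
  rw [← restrict_Ioo_eq_restrict_Ioc] at hgtw ⊢
  filter_upwards [hgtw, ae_restrict_mem measurableSet_Ioo] with x hx hxm
  rw [mul_assoc, show G x = gt x from (hgtAC x (Set.Ioo_subset_Icc_self hxm)).symm]
  exact mul_pos (hh_pos x hxm) hx

/-- Remark 3.7 of the paper: if there is a real-valued absolutely continuous
function g̃ on [a,b] with ∫ₐᵇ p|g̃'|² < ∞ and g̃w > 0 a.e., then there is such a
function which in addition vanishes at both endpoints. Absolute continuity is
expressed through an integrable a.e. derivative. -/
theorem comparison_function_vanishing_endpoints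
    (a b : ℝ) (hab : a < b) (p w : ℝ → ℝ)
    (hpm : Measurable p) (hwm : Measurable w)
    (hp_pos : ∀ᵐ x ∂(volume.restrict (Set.Ioc a b)), 0 < p x)
    (hp_int : IntegrableOn (fun x => 1 / p x) (Set.Ioc a b))
    (hw_int : IntegrableOn w (Set.Ioc a b))
    (hw_ne : ∀ᵐ x ∂(volume.restrict (Set.Ioc a b)), w x ≠ 0)
    (gt gt' : ℝ → ℝ) (hgt'm : Measurable gt')
    (hgt'int : IntegrableOn gt' (Set.Icc a b))
    (hgtAC : ∀ x ∈ Set.Icc a b, gt x = gt a + ∫ t in a..x, gt' t)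
    (hgt2 : IntegrableOn (fun t => p t * gt' t ^ 2) (Set.Ioc a b))
    (hgtw : ∀ᵐ x ∂(volume.restrict (Set.Ioc a b)), 0 < gt x * w x) :
    ∃ g g' : ℝ → ℝ, Measurable g'
      ∧ IntegrableOn g' (Set.Icc a b)
      ∧ (∀ x ∈ Set.Icc a b, g x = g a + ∫ t in a..x, g' t)
      ∧ g a = 0 ∧ g b = 0
      ∧ IntegrableOn (fun t => p t * g' t ^ 2) (Set.Ioc a b)
      ∧ (∀ᵐ x ∂(volume.restrict (Set.Ioc a b)), 0 < g x * w x) :=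
  comparison_function_vanishing_endpoints_general hab.le hp_pos hp_int hgt'int hgtAC hgt2 hgtw
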